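/- Under assumptions (A) and (B), the partition function satisfies Z_N ~ |w| exp(N sup_{m̂ ∈ Δ̂} G(m̂)) as N → ∞; that is, lim_{N→∞} Z_N / (|w| exp(N sup_{m̂ ∈ Δ̂} G(m̂))) = 1. -/

import Mathlib

open Filter Real MeasureTheory

/-!
Grouping the configurations by magnetization `m` turns `Z_N` into a sum over the lattice points of
mesh `1 / N` in the simplex. Its terms are `exp (N * (F m + ent m))` times a probability that, by
Stirling's formula, is close to `(2π N) ^ (-(q - 1) / 2) * (∏ k, m k) ^ (-1 / 2)`. Near a maximizer
`M j` set `m = M j + y / √N`. The exponent, relative to its maximal value, tends to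
`-⟨y, H j y⟩ / 2` and is at most `-c ‖y‖ ^ 2`, so by dominated convergence the sum over a small ball
around `M j` tends to a Gaussian integral, whose value is `w j`. Away from the maximizers the
relative exponent is at most `-ε N`, which beats the polynomial number of lattice points.
-/

/-! ### Counting configurations by type -/

section Types

variable {κ : Type*} [Fintype κ]

variable (κ) in
lemma sum_monomial_card_fiber (ι : Type*) [Fintype ι] [DecidableEq ι] [DecidableEq κ] :
    ∑ σ : ι → κ, MvPolynomial.monomial (Finsupp.equivFunOnFinite.symm
        fun k => (Finset.univ.filter fun i => σ i = k).card) (1 : ℕ)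
      = ∑ m ∈ Finset.piAntidiag (Finset.univ : Finset κ) (Fintype.card ι),
        MvPolynomial.monomial (Finsupp.equivFunOnFinite.symm m)
          (Nat.multinomial Finset.univ m) := by
  calc _ = ∑ σ : ι → κ, ∏ i, (MvPolynomial.X (σ i) : MvPolynomial κ ℕ) := by
        refine Finset.sum_congr rfl fun σ _ => ?_
        rw [MvPolynomial.monomial_eq, Finsupp.prod_fintype _ _ (by simp), map_one, one_mul,
          ← Finset.prod_fiberwise Finset.univ σ]
        exact Finset.prod_congr rfl fun k _ =>
          (Finset.prod_eq_pow_card fun i hi => by rw [(Finset.mem_filter.1 hi).2]).symm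
    _ = (∑ k : κ, (MvPolynomial.X k : MvPolynomial κ ℕ)) ^ Fintype.card ι := by
        rw [← Finset.card_univ, ← Finset.prod_const, Finset.prod_univ_sum, Fintype.piFinset_univ]
    _ = _ := by
        rw [Finset.sum_pow_eq_sum_piAntidiag]
        refine Finset.sum_congr rfl fun m _ => ?_
        rw [MvPolynomial.monomial_eq, Finsupp.prod_fintype _ _ (by simp)]
        simp

lemma sum_card_fiber_eq_sum_multinomial {A : Type*} [AddCommMonoid A] (ι : Type*) [Fintype ι]
    [DecidableEq ι] [DecidableEq κ] (f : (κ → ℕ) → A) :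
    ∑ σ : ι → κ, f (fun k => (Finset.univ.filter fun i => σ i = k).card)
      = ∑ m ∈ Finset.piAntidiag Finset.univ (Fintype.card ι),
        Nat.multinomial Finset.univ m • f m := by
  -- The monomials are a basis of the polynomials, so `X ^ m ↦ f m` extends linearly to both sides.
  have h := congrArg ((MvPolynomial.basisMonomials κ ℕ).constr ℕ fun m => f m)
    (sum_monomial_card_fiber κ ι)
  have hφ (m : κ →₀ ℕ) (c : ℕ) : (MvPolynomial.basisMonomials κ ℕ).constr ℕ (fun m => f m)
      (MvPolynomial.monomial m c) = c • f m := by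
    have hb : MvPolynomial.monomial m c = c • MvPolynomial.basisMonomials κ ℕ m := by
      rw [MvPolynomial.coe_basisMonomials, MvPolynomial.smul_monomial, smul_eq_mul, mul_one]
    rw [hb, map_smul, Module.Basis.constr_basis]
  simpa only [map_sum, hφ, one_smul, Finsupp.coe_equivFunOnFinite_symm] using h

/-- The method-of-types probability: the chance that a sample of size `∑ k, m k`, drawn
independently from its own empirical law `m k / ∑ k, m k`, has occupation numbers `m`. -/
noncomputable def typeProb (m : κ → ℕ) : ℝ :=
  Nat.multinomial Finset.univ m * ∏ k, ((m k : ℝ) / ↑(∑ j, m j)) ^ m k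

/-- The Shannon entropy, with `0 log 0 = 0`. -/
noncomputable def entropy (x : κ → ℝ) : ℝ := ∑ k, negMulLog (x k)

lemma continuous_entropy : Continuous (entropy (κ := κ)) :=
  continuous_finsetSum _ fun k _ => continuous_negMulLog.comp (continuous_apply k)

lemma typeProb_nonneg (m : κ → ℕ) : 0 ≤ typeProb m := by
  unfold typeProb; positivity

lemma multinomial_mul_prod_pow_le {p : κ → ℝ} (hp : ∀ k, 0 ≤ p k) (m : κ → ℕ) :
    Nat.multinomial Finset.univ m * ∏ k, p k ^ m k ≤ (∑ k, p k) ^ ∑ k, m k := by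
  classical
  rw [Finset.sum_pow_eq_sum_piAntidiag]
  exact Finset.single_le_sum
    (f := fun m' => (Nat.multinomial Finset.univ m' : ℝ) * ∏ k, p k ^ m' k)
    (fun m' _ => mul_nonneg (Nat.cast_nonneg _) (Finset.prod_nonneg fun k _ => pow_nonneg (hp k) _))
    (by simp)

lemma typeProb_le_one (m : κ → ℕ) : typeProb m ≤ 1 := by
  refine (multinomial_mul_prod_pow_le (fun k => by positivity) m).trans ?_
  rw [← Finset.sum_div, ← Nat.cast_sum]
  exact pow_le_one₀ (by positivity) (div_self_le_one _)

lemma div_pow_mul_exp_negMulLog {n N : ℕ} (hn : n ≤ N) :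
    ((n : ℝ) / N) ^ n * exp (N * negMulLog (n / N)) = 1 := by
  rcases Nat.eq_zero_or_pos n with rfl | hpos
  · simp
  have hN : (0 : ℝ) < N := by exact_mod_cast hpos.trans_le hn
  have hn0 : (0 : ℝ) < n := by exact_mod_cast hpos
  rw [← exp_log (pow_pos (div_pos hn0 hN) n), ← exp_add, log_pow, negMulLog, exp_eq_one_iff]
  field_simp
  ring

lemma multinomial_eq_typeProb_mul_exp {m : κ → ℕ} {N : ℕ} (hm : ∑ k, m k = N) :
    (Nat.multinomial Finset.univ m : ℝ)
      = typeProb m * exp (N * entropy fun k => (m k : ℝ) / N) := by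
  have hle (k : κ) : m k ≤ N :=
    hm ▸ Finset.single_le_sum (fun _ _ => Nat.zero_le _) (Finset.mem_univ k)
  rw [typeProb, hm, entropy, Finset.mul_sum, exp_sum, mul_assoc, ← Finset.prod_mul_distrib,
    Finset.prod_congr rfl fun k _ => div_pow_mul_exp_negMulLog (hle k), Finset.prod_const_one,
    mul_one]

end Types

/-! ### Stirling's formula for type probabilities -/

section Stirling

open scoped Topology

variable {κ : Type*} [Fintype κ]

lemma factorial_eq_stirlingSeq_mul {n : ℕ} (hn : n ≠ 0) :
    (n.factorial : ℝ) = Stirling.stirlingSeq n * (√2 * √n) * (n / exp 1) ^ n := by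
  rw [Stirling.stirlingSeq, sqrt_mul zero_le_two]
  field_simp

lemma stirlingSeq_pos {n : ℕ} (hn : n ≠ 0) : 0 < Stirling.stirlingSeq n :=
  (sqrt_pos.2 pi_pos).trans_le (Stirling.sqrt_pi_le_stirlingSeq hn)

lemma exists_stirlingSeq_le : ∃ K, ∀ n, Stirling.stirlingSeq n ≤ K := by
  obtain ⟨K, hK⟩ := Stirling.tendsto_stirlingSeq_sqrt_pi.bddAbove_range
  exact ⟨K, fun n => hK ⟨n, rfl⟩⟩

/-- All exponential factors of Stirling's formula cancel exactly. -/
lemma typeProb_mul_prod_stirlingSeq [Nonempty κ] {m : κ → ℕ} (hm : ∀ k, m k ≠ 0) :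
    typeProb m * ∏ k, (Stirling.stirlingSeq (m k) * (√2 * √(m k)))
      = Stirling.stirlingSeq (∑ k, m k) * (√2 * √↑(∑ k, m k)) := by
  set N := ∑ k, m k with hN
  have hN0 : N ≠ 0 := by
    simpa [hN, Finset.sum_eq_zero_iff] using ⟨Classical.arbitrary κ, hm _⟩
  have hfact := congrArg (Nat.cast (R := ℝ)) (Nat.multinomial_spec Finset.univ m)
  push_cast at hfact
  rw [← hN, factorial_eq_stirlingSeq_mul hN0,
    Finset.prod_congr rfl fun k _ => factorial_eq_stirlingSeq_mul (hm k)] at hfact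
  have hexp : ∏ k, ((m k : ℝ) / exp 1) ^ m k = (∏ k, ((m k : ℝ) / N) ^ m k) * (N / exp 1) ^ N := by
    rw [hN, ← Finset.prod_pow_eq_pow_sum, ← hN, ← Finset.prod_mul_distrib]
    refine Finset.prod_congr rfl fun k _ => ?_
    rw [← mul_pow]
    field_simp
  rw [Finset.prod_mul_distrib, hexp] at hfact
  have hpow : ((N : ℝ) / exp 1) ^ N ≠ 0 := by positivity
  rw [← mul_left_inj' hpow, ← hfact, typeProb]
  ring

lemma sqrt_pow_mul_typeProb_eq {d : ℕ} (hκ : Fintype.card κ = d + 1) {m : κ → ℕ}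
    (hm : ∀ k, m k ≠ 0) {N : ℕ} (hN : ∑ k, m k = N) :
    √N ^ d * typeProb m = Stirling.stirlingSeq N / (√2 ^ d * ∏ k, Stirling.stirlingSeq (m k))
      * (∏ k, √(m k / N))⁻¹ := by
  have : Nonempty κ := Fintype.card_pos_iff.1 (by omega)
  have h := typeProb_mul_prod_stirlingSeq hm
  rw [hN] at h
  have hN0 : N ≠ 0 := by
    simpa [← hN, Finset.sum_eq_zero_iff] using ⟨Classical.arbitrary κ, hm _⟩
  have hseq : ∏ k, Stirling.stirlingSeq (m k) ≠ 0 :=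
    Finset.prod_ne_zero_iff.2 fun k _ => (stirlingSeq_pos (hm k)).ne'
  have hsqrt : ∏ k, √(m k : ℝ) ≠ 0 :=
    Finset.prod_ne_zero_iff.2 fun k _ => by have := hm k; positivity
  simp only [sqrt_div (Nat.cast_nonneg _), Finset.prod_mul_distrib, Finset.prod_div_distrib,
    Finset.prod_const, Finset.card_univ, hκ, pow_succ] at h ⊢
  field_simp at h ⊢
  linear_combination h

/-- The local limit theorem for the occupation numbers of a large sample. -/
lemma tendsto_sqrt_pow_mul_typeProb {d : ℕ} (hκ : Fintype.card κ = d + 1) {m : ℕ → κ → ℕ}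
    (hm : ∀ᶠ N in atTop, ∑ k, m N k = N) {x : κ → ℝ} (hx : ∀ k, 0 < x k)
    (hmx : ∀ k, Tendsto (fun N => (m N k : ℝ) / N) atTop (𝓝 (x k))) :
    Tendsto (fun N : ℕ => √N ^ d * typeProb (m N)) atTop
      (𝓝 ((√(2 * π) ^ d)⁻¹ * (∏ k, √(x k))⁻¹)) := by
  have hm_top (k : κ) : Tendsto (fun N => m N k) atTop atTop := by
    rw [← tendsto_natCast_atTop_iff (R := ℝ)]
    refine ((hmx k).pos_mul_atTop (hx k) tendsto_natCast_atTop_atTop).congr' ?_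
    filter_upwards [eventually_ne_atTop 0] with N hN
    rw [div_mul_cancel₀ _ (by positivity)]
  have hS := Stirling.tendsto_stirlingSeq_sqrt_pi
  have hlim : (√(2 * π) ^ d)⁻¹ = √π / (√2 ^ d * ∏ _k : κ, √π) := by
    rw [Finset.prod_const, Finset.card_univ, hκ, sqrt_mul zero_le_two, mul_pow, pow_succ]
    field_simp
  rw [hlim]
  refine ((hS.div ((tendsto_finsetProd _ fun k _ => hS.comp (hm_top k)).const_mul _)
    (by positivity)).mul ((tendsto_finsetProd _ fun k _ => (hmx k).sqrt).inv₀
    (Finset.prod_ne_zero_iff.2 fun k _ => (sqrt_pos.2 (hx k)).ne'))).congr' ?_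
  filter_upwards [hm, eventually_all.2 fun k => (hm_top k).eventually (eventually_ne_atTop 0)]
    with N hN hN0 using (sqrt_pow_mul_typeProb_eq hκ hN0 hN).symm

lemma exists_sqrt_pow_mul_typeProb_le {d : ℕ} (hκ : Fintype.card κ = d + 1) {c : ℝ} (hc : 0 < c) :
    ∃ C, ∀ m : κ → ℕ, (∀ k, c ≤ m k / ↑(∑ j, m j)) → √↑(∑ j, m j) ^ d * typeProb m ≤ C := by
  obtain ⟨K, hK⟩ := exists_stirlingSeq_le
  have hK0 : 0 ≤ K := by simpa using hK 0
  refine ⟨K / (√2 ^ d * ∏ _k : κ, √π) * (∏ _k : κ, √c)⁻¹, fun m hcm => ?_⟩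
  have hm (k : κ) : m k ≠ 0 := fun hk => by simpa [hk, hc.not_ge] using hcm k
  rw [sqrt_pow_mul_typeProb_eq hκ hm rfl]
  gcongr with k _ k _
  · exact hK _
  · exact Stirling.sqrt_pi_le_stirlingSeq (hm k)
  · exact hcm k

end Stirling

/-! ### Second-order expansion at a critical point -/

section Taylor

open scoped Topology

lemma hasFDerivAt_apply_sub_self {E F : Type*} [NormedAddCommGroup E] [NormedSpace ℝ E]
    [NormedAddCommGroup F] [NormedSpace ℝ F] {D : E →L[ℝ] E →L[ℝ] F} (hD : ∀ v w, D v w = D w v)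
    (x₀ x : E) :
    HasFDerivAt (fun z => (2⁻¹ : ℝ) • D (z - x₀) (z - x₀)) (D (x - x₀)) x := by
  have hsub : HasFDerivAt (fun z => z - x₀) (ContinuousLinearMap.id ℝ E) x :=
    (hasFDerivAt_id x).sub_const x₀
  refine (((D.hasFDerivAt.comp x hsub).clm_apply hsub).const_smul (2⁻¹ : ℝ)).congr_fderiv ?_
  ext v
  simp [hD v]
  module

lemma isLittleO_taylor_two {E F : Type*} [NormedAddCommGroup E] [NormedSpace ℝ E]
    [NormedAddCommGroup F] [NormedSpace ℝ F] {f : E → F} {f' : E → E →L[ℝ] F}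
    {D : E →L[ℝ] E →L[ℝ] F} {x₀ : E} (hf : ∀ᶠ x in 𝓝 x₀, HasFDerivAt f (f' x) x)
    (hf' : HasFDerivAt f' D x₀) :
    (fun x => f x - f x₀ - f' x₀ (x - x₀) - (2⁻¹ : ℝ) • D (x - x₀) (x - x₀))
      =o[𝓝 x₀] fun x => ‖x - x₀‖ ^ 2 := by
  obtain ⟨r, hr, hball⟩ := Metric.eventually_nhds_iff_ball.1 hf
  have hx₀ : x₀ ∈ Metric.ball x₀ r := Metric.mem_ball_self hr
  have hD := second_derivative_symmetric_of_eventually hf hf'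
  have hderiv : ∀ x ∈ Metric.ball x₀ r, HasFDerivWithinAt
      (fun x => f x - f' x₀ (x - x₀) - (2⁻¹ : ℝ) • D (x - x₀) (x - x₀))
      (f' x - f' x₀ - D (x - x₀)) (Metric.ball x₀ r) x := fun x hx =>
    (((hball x hx).sub ((f' x₀).hasFDerivAt.comp x ((hasFDerivAt_id x).sub_const x₀))).sub
      (hasFDerivAt_apply_sub_self hD x₀ x)).hasFDerivWithinAt
  have hsmall : (fun x => f' x - f' x₀ - D (x - x₀)) =o[𝓝[Metric.ball x₀ r] x₀]
      fun x => ‖x - x₀‖ ^ 1 := by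
    simpa only [pow_one] using (hf'.isLittleO.mono nhdsWithin_le_nhds).norm_right
  have := (convex_ball x₀ r).isLittleO_pow_succ hx₀ hderiv hsmall
  rw [nhdsWithin_eq_nhds.2 (Metric.ball_mem_nhds x₀ hr)] at this
  refine this.congr_left fun x => ?_
  simp only [sub_self, map_zero, smul_zero, sub_zero]
  abel

end Taylor

section CriticalExpansion

open scoped Matrix Topology

variable {ι : Type*} [Fintype ι]

/-- `f` has a second-order expansion at `x₀` with vanishing gradient and Hessian `-H`. At a
maximizer the matrix `H` is positive semidefinite. -/
def HasCriticalExpansionAt (f : (ι → ℝ) → ℝ) (H : Matrix ι ι ℝ) (x₀ : ι → ℝ) : Prop :=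
  (fun x => f x - f x₀ + ((x - x₀) ⬝ᵥ H *ᵥ (x - x₀)) / 2) =o[𝓝 x₀] fun x => ‖x - x₀‖ ^ 2

lemma dotProduct_mulVec_eq_of_single [DecidableEq ι] (B : (ι → ℝ) →ₗ[ℝ] (ι → ℝ) →ₗ[ℝ] ℝ)
    {H : Matrix ι ι ℝ} (hB : ∀ k l, B (Pi.single k 1) (Pi.single l 1) = H k l) (v w : ι → ℝ) :
    v ⬝ᵥ H *ᵥ w = B v w := by
  have hH : H = LinearMap.toMatrix₂' ℝ B := by
    ext k l
    rw [LinearMap.toMatrix₂'_apply, hB]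
  rw [hH, ← Matrix.toLinearMap₂'_apply', Matrix.toLinearMap₂'_toMatrix']

lemma hasCriticalExpansionAt_of_contDiffAt [DecidableEq ι] {f : (ι → ℝ) → ℝ} {H : Matrix ι ι ℝ}
    {x₀ : ι → ℝ} (hf : ContDiffAt ℝ 2 f x₀) (hf₀ : fderiv ℝ f x₀ = 0)
    (hH : ∀ k l, H k l =
      -(fderiv ℝ (fun x => fderiv ℝ f x (Pi.single l 1)) x₀) (Pi.single k 1)) :
    HasCriticalExpansionAt f H x₀ := by
  have hdiff : ∀ᶠ x in 𝓝 x₀, HasFDerivAt f (fderiv ℝ f x) x :=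
    (hf.eventually (by simp)).mono fun x hx => (hx.differentiableAt (by simp)).hasFDerivAt
  have hdiff₂ : DifferentiableAt ℝ (fderiv ℝ f) x₀ :=
    (hf.fderiv_right (m := 1) (by norm_num)).differentiableAt (by simp)
  set D := fderiv ℝ (fderiv ℝ f) x₀
  have hHessian : ∀ v w, v ⬝ᵥ H *ᵥ w = -D v w := by
    refine dotProduct_mulVec_eq_of_single (-D.toLinearMap₁₂) fun k l => ?_
    rw [hH, fderiv_clm_apply hdiff₂ (by fun_prop)]
    simp [D]
  refine (isLittleO_taylor_two hdiff hdiff₂.hasFDerivAt).congr_left fun x => ?_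
  rw [hHessian, hf₀, zero_apply, smul_eq_mul]
  ring

end CriticalExpansion

/-! ### Positive definite quadratic forms and Gaussian integrals -/

section PosDef

open scoped Matrix MatrixOrder Topology

variable {ι : Type*} [Fintype ι]

lemma exists_transpose_mul_self_of_posDef [DecidableEq ι] {H : Matrix ι ι ℝ} (hH : H.PosDef) :
    ∃ B : Matrix ι ι ℝ, H = Bᵀ * B ∧ B.det ≠ 0 := by
  obtain ⟨B, hB⟩ := CStarAlgebra.nonneg_iff_eq_star_mul_self.mp hH.posSemidef.nonneg
  rw [Matrix.star_eq_conjTranspose, Matrix.conjTranspose_eq_transpose_of_trivial] at hB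
  refine ⟨B, hB, fun hdet => hH.det_pos.ne' ?_⟩
  rw [hB, Matrix.det_mul, hdet, mul_zero]

lemma dotProduct_transpose_mul_self_mulVec (B : Matrix ι ι ℝ) (y : ι → ℝ) :
    y ⬝ᵥ (Bᵀ * B) *ᵥ y = ∑ i, (B *ᵥ y) i ^ 2 := by
  rw [← Matrix.mulVec_mulVec, Matrix.dotProduct_mulVec, Matrix.vecMul_transpose]
  simp only [dotProduct, sq]

lemma mulVec_injective_of_det_ne_zero [DecidableEq ι] {B : Matrix ι ι ℝ} (hB : B.det ≠ 0) :
    Function.Injective (Matrix.toLin' B) :=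
  Matrix.mulVec_injective_iff_isUnit.2 ((Matrix.isUnit_iff_isUnit_det B).2 hB.isUnit)

lemma sq_norm_le_sum_sq (z : ι → ℝ) : ‖z‖ ^ 2 ≤ ∑ i, z i ^ 2 := by
  refine (Real.le_sqrt (norm_nonneg z) (by positivity)).1 ?_
  refine (pi_norm_le_iff_of_nonneg (Real.sqrt_nonneg _)).2 fun i => Real.abs_le_sqrt ?_
  exact Finset.single_le_sum (f := fun i => z i ^ 2) (fun _ _ => sq_nonneg _) (Finset.mem_univ i)

lemma exists_mul_sq_norm_le_of_posDef {H : Matrix ι ι ℝ} (hH : H.PosDef) :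
    ∃ c > 0, ∀ y : ι → ℝ, c * ‖y‖ ^ 2 ≤ y ⬝ᵥ H *ᵥ y := by
  classical
  obtain ⟨B, rfl, hB⟩ := exists_transpose_mul_self_of_posDef hH
  obtain ⟨K, hK, hanti⟩ := (Matrix.toLin' B).exists_antilipschitzWith
    (LinearMap.ker_eq_bot.2 (mulVec_injective_of_det_ne_zero hB))
  refine ⟨((K : ℝ) ^ 2)⁻¹, by positivity, fun y => ?_⟩
  have hy : ‖y‖ ≤ K * ‖B *ᵥ y‖ := by simpa using hanti.le_mul_norm_sub y 0
  rw [dotProduct_transpose_mul_self_mulVec, inv_mul_le_iff₀ (by positivity)]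
  calc ‖y‖ ^ 2 ≤ (K * ‖B *ᵥ y‖) ^ 2 := by gcongr
    _ = K ^ 2 * ‖B *ᵥ y‖ ^ 2 := mul_pow _ _ 2
    _ ≤ K ^ 2 * ∑ i, (B *ᵥ y) i ^ 2 := by gcongr; exact sq_norm_le_sum_sq _

lemma integral_exp_neg_half_sum_sq :
    ∫ z : ι → ℝ, exp (-(∑ i, z i ^ 2) / 2) = √(2 * π) ^ Fintype.card ι := by
  have hprod : ∀ z : ι → ℝ, exp (-(∑ i, z i ^ 2) / 2) = ∏ i, exp (-(1 / 2) * z i ^ 2) := by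
    intro z
    rw [← Real.exp_sum, ← Finset.mul_sum]
    ring_nf
  simp only [hprod]
  rw [integral_fintype_prod_volume_eq_pow (fun t : ℝ => exp (-(1 / 2) * t ^ 2)), integral_gaussian]
  congr 2
  ring

lemma integral_exp_neg_half_quadraticForm [DecidableEq ι] {H : Matrix ι ι ℝ} (hH : H.PosDef) :
    ∫ y : ι → ℝ, exp (-(y ⬝ᵥ H *ᵥ y) / 2) = √(2 * π) ^ Fintype.card ι / √H.det := by
  obtain ⟨B, rfl, hB⟩ := exists_transpose_mul_self_of_posDef hH
  have hembed : MeasurableEmbedding (Matrix.toLin' B) :=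
    (LinearMap.continuous_of_finiteDimensional _).measurableEmbedding
      (mulVec_injective_of_det_ne_zero hB)
  calc ∫ y : ι → ℝ, exp (-(y ⬝ᵥ (Bᵀ * B) *ᵥ y) / 2)
      = ∫ z, exp (-(∑ i, z i ^ 2) / 2) ∂(volume.map (Matrix.toLin' B)) := by
        simp only [hembed.integral_map, dotProduct_transpose_mul_self_mulVec, Matrix.toLin'_apply]
    _ = |B.det|⁻¹ * √(2 * π) ^ Fintype.card ι := by
        rw [Real.map_matrix_volume_pi_eq_smul_volume_pi hB, integral_smul_measure,
          integral_exp_neg_half_sum_sq, ENNReal.toReal_ofReal (abs_nonneg _), abs_inv, smul_eq_mul]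
    _ = √(2 * π) ^ Fintype.card ι / √(Bᵀ * B).det := by
        rw [Matrix.det_mul, Matrix.det_transpose, Real.sqrt_mul_self_eq_abs, inv_mul_eq_div]

end PosDef

section CriticalExpansion

open scoped Matrix Topology

variable {ι : Type*} [Fintype ι] {f : (ι → ℝ) → ℝ} {H : Matrix ι ι ℝ} {x₀ : ι → ℝ}

lemma HasCriticalExpansionAt.exists_eventually_le (hf : HasCriticalExpansionAt f H x₀)
    (hH : H.PosDef) : ∃ c > 0, ∀ᶠ x in 𝓝 x₀, f x - f x₀ ≤ -c * ‖x - x₀‖ ^ 2 := by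
  obtain ⟨c, hc, hcoercive⟩ := exists_mul_sq_norm_le_of_posDef hH
  refine ⟨c / 4, by positivity, ?_⟩
  filter_upwards [hf.def (c := c / 4) (by positivity)] with x hx
  rw [norm_pow, norm_norm] at hx
  have := (le_abs_self _).trans hx
  linarith [hcoercive (x - x₀)]

lemma HasCriticalExpansionAt.tendsto_sq_mul_sub {α : Type*} {l : Filter α}
    (hf : HasCriticalExpansionAt f H x₀) {x : α → ι → ℝ} {r : α → ℝ} {y : ι → ℝ}
    (hx : Tendsto x l (𝓝 x₀)) (hy : Tendsto (fun n => r n • (x n - x₀)) l (𝓝 y)) :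
    Tendsto (fun n => r n ^ 2 * (f (x n) - f x₀)) l (𝓝 (-(y ⬝ᵥ H *ᵥ y) / 2)) := by
  have hremainder : Tendsto (fun n => r n ^ 2 * (f (x n) - f x₀ +
      ((x n - x₀) ⬝ᵥ H *ᵥ (x n - x₀)) / 2)) l (𝓝 0) := by
    have hbounded : (fun n => r n ^ 2 * ‖x n - x₀‖ ^ 2) =O[l] fun _ => (1 : ℝ) := by
      simpa only [norm_smul, mul_pow, Real.norm_eq_abs, sq_abs] using (hy.norm.pow 2).isBigO_one ℝ
    exact (Asymptotics.isLittleO_one_iff ℝ).1 <|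
      ((Asymptotics.isBigO_refl _ l).mul_isLittleO (hf.comp_tendsto hx)).trans_isBigO hbounded
  have hquad : Tendsto (fun n => ((r n • (x n - x₀)) ⬝ᵥ H *ᵥ (r n • (x n - x₀))) / 2) l
      (𝓝 ((y ⬝ᵥ H *ᵥ y) / 2)) := by
    have : Continuous fun z : ι → ℝ => (z ⬝ᵥ H *ᵥ z) / 2 := by fun_prop
    exact (this.tendsto y).comp hy
  convert hremainder.sub hquad using 2 with n
  · simp only [Matrix.mulVec_smul, dotProduct_smul, smul_dotProduct, smul_eq_mul]
    ring
  · ring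

end CriticalExpansion

/-! ### Riemann sums over shrinking lattices -/

lemma integrable_exp_neg_mul_norm_sq {E : Type*} [NormedAddCommGroup E] [NormedSpace ℝ E]
    [FiniteDimensional ℝ E] [MeasurableSpace E] [BorelSpace E] (μ : Measure E) [μ.IsAddHaarMeasure]
    {c : ℝ} (hc : 0 < c) : Integrable (fun y : E => exp (-c * ‖y‖ ^ 2)) μ := by
  cases subsingleton_or_nontrivial E
  · exact Integrable.of_subsingleton
  · refine (integrable_fun_norm_addHaar (f := fun r : ℝ => exp (-c * r ^ 2)) μ).2 ?_
    have hdim : (-1 : ℝ) < (Module.finrank ℝ E - 1 : ℕ) := neg_one_lt_zero.trans_le (by positivity)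
    simpa only [rpow_natCast, smul_eq_mul] using integrableOn_rpow_mul_exp_neg_mul_sq hc hdim

section Lattice

open scoped Topology

variable {ι : Type*}

lemma measurePreserving_floor [Fintype ι] :
    MeasurePreserving (fun (y : ι → ℝ) k => ⌊y k⌋) volume Measure.count := by
  have hmeas : Measurable fun (y : ι → ℝ) k => ⌊y k⌋ := by fun_prop
  refine ⟨hmeas, Measure.ext_of_singleton fun u => ?_⟩
  have hcube : (fun (y : ι → ℝ) k => ⌊y k⌋) ⁻¹' {u} =
      Set.univ.pi fun k => Set.Ico (u k : ℝ) (u k + 1) := by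
    ext y
    simp [funext_iff, Int.floor_eq_iff]
  rw [Measure.map_apply hmeas (measurableSet_singleton u), hcube, Real.volume_pi_Ico]
  simp

lemma sum_eq_integral_indicator_floor [Fintype ι] (S : Finset (ι → ℤ)) (f : (ι → ℤ) → ℝ) :
    ∑ u ∈ S, f u = ∫ y : ι → ℝ, (S : Set (ι → ℤ)).indicator f fun k => ⌊y k⌋ := by
  have hmeas : Measurable ((S : Set (ι → ℤ)).indicator f) := measurable_of_countable _
  have hint : IntegrableOn f (S : Set (ι → ℤ)) Measure.count := by
    rw [← (S : Set (ι → ℤ)).biUnion_of_singleton]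
    simp [integrableOn_finset_iUnion]
  rw [← integral_map measurePreserving_floor.aemeasurable hmeas.aestronglyMeasurable,
    measurePreserving_floor.map_eq, integral_indicator S.measurableSet,
    setIntegral_finset S hint]
  simp

lemma integral_eq_pow_mul_integral_comp_add_smul [Fintype ι] (f : (ι → ℝ) → ℝ) (v : ι → ℝ) {r : ℝ}
    (hr : 0 < r) : ∫ y, f y = r ^ Fintype.card ι * ∫ y, f (v + r • y) := by
  rw [Measure.integral_comp_smul volume (fun z => f (v + z)) r, integral_add_left_eq_self f v,
    Module.finrank_fintype_fun_eq_card, abs_of_pos (by positivity), smul_eq_mul,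
    mul_inv_cancel_left₀ (by positivity)]

/-- The point `u / N` of the lattice of mesh `1 / N`. -/
noncomputable def latticePoint (N : ℕ) (u : ι → ℤ) : ι → ℝ := fun k => u k / N

/-- The index `u` of the lattice cube of mesh `1 / N` that contains `x₀ + y / √N`. Thus `y` is the
coordinate on the scale of the central limit theorem. -/
noncomputable def latticeIndex (x₀ : ι → ℝ) (N : ℕ) (y : ι → ℝ) : ι → ℤ :=
  fun k => ⌊((N : ℝ) • x₀ + √N • y) k⌋

lemma measurable_latticeIndex (x₀ : ι → ℝ) (N : ℕ) : Measurable (latticeIndex x₀ N) :=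
  measurable_pi_lambda _ fun k => Int.measurable_floor.comp (by fun_prop)

lemma norm_sqrt_smul_latticePoint_sub_le [Fintype ι] {N : ℕ} (hN : 0 < N) (x₀ y : ι → ℝ) :
    ‖√N • (latticePoint N (latticeIndex x₀ N y) - x₀) - y‖ ≤ (√N)⁻¹ := by
  have hN' : (0 : ℝ) < N := Nat.cast_pos.2 hN
  refine (pi_norm_le_iff_of_nonneg (by positivity)).2 fun k => ?_
  set t := ((N : ℝ) • x₀ + √N • y) k with ht
  have hfract : (√N • (latticePoint N (latticeIndex x₀ N y) - x₀) - y) k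
      = -((√N)⁻¹ * Int.fract t) := by
    simp only [latticePoint, latticeIndex, Pi.sub_apply, Pi.smul_apply, smul_eq_mul, ← ht,
      ← Int.self_sub_floor]
    rw [ht, Pi.add_apply, Pi.smul_apply, Pi.smul_apply, smul_eq_mul, smul_eq_mul]
    field_simp
    linear_combination (⌊N * x₀ k + √N * y k⌋ - N * x₀ k) * Real.sq_sqrt hN'.le
  rw [hfract, norm_neg, norm_mul, norm_inv, Real.norm_of_nonneg (Real.sqrt_nonneg _),
    Real.norm_of_nonneg (Int.fract_nonneg t)]
  exact mul_le_of_le_one_right (by positivity) (Int.fract_lt_one t).le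

lemma tendsto_inv_sqrt_natCast : Tendsto (fun N : ℕ => (√N)⁻¹) atTop (𝓝 0) :=
  (Real.tendsto_sqrt_atTop.comp tendsto_natCast_atTop_atTop).inv_tendsto_atTop

lemma tendsto_sqrt_smul_latticePoint_sub [Finite ι] (x₀ y : ι → ℝ) :
    Tendsto (fun N : ℕ => √N • (latticePoint N (latticeIndex x₀ N y) - x₀)) atTop (𝓝 y) := by
  cases nonempty_fintype ι
  refine tendsto_iff_norm_sub_tendsto_zero.2 <|
    squeeze_zero' (.of_forall fun _ => norm_nonneg _) ?_ tendsto_inv_sqrt_natCast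
  filter_upwards [eventually_gt_atTop 0] with N hN using norm_sqrt_smul_latticePoint_sub_le hN x₀ y

lemma tendsto_latticePoint_latticeIndex [Finite ι] (x₀ y : ι → ℝ) :
    Tendsto (fun N : ℕ => latticePoint N (latticeIndex x₀ N y)) atTop (𝓝 x₀) := by
  rw [← tendsto_sub_nhds_zero_iff]
  have h := tendsto_inv_sqrt_natCast.smul (tendsto_sqrt_smul_latticePoint_sub x₀ y)
  rw [zero_smul] at h
  refine h.congr' ?_
  filter_upwards [eventually_gt_atTop 0] with N hN
  exact inv_smul_smul₀ (Real.sqrt_pos.2 (Nat.cast_pos.2 hN)).ne' _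

lemma sum_eq_integral_latticeIndex [Fintype ι] (S : Finset (ι → ℤ)) (f : (ι → ℤ) → ℝ)
    (x₀ : ι → ℝ) {N : ℕ} (hN : 0 < N) : ∑ u ∈ S, f u =
      ∫ y, √N ^ Fintype.card ι * (S : Set (ι → ℤ)).indicator f (latticeIndex x₀ N y) := by
  rw [sum_eq_integral_indicator_floor, integral_const_mul]
  exact integral_eq_pow_mul_integral_comp_add_smul _ ((N : ℝ) • x₀)
    (Real.sqrt_pos.2 (Nat.cast_pos.2 hN))

lemma exp_neg_mul_sq_norm_le {E : Type*} [SeminormedAddCommGroup E] {c : ℝ} (hc : 0 ≤ c) {y z : E}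
    (hyz : ‖z - y‖ ≤ 1) : exp (-c * ‖z‖ ^ 2) ≤ exp c * exp (-(c / 2) * ‖y‖ ^ 2) := by
  have hy : ‖y‖ ≤ ‖z‖ + 1 := by linarith [norm_le_norm_add_norm_sub z y]
  have hsq : ‖y‖ ^ 2 ≤ 2 * ‖z‖ ^ 2 + 2 := by
    nlinarith [norm_nonneg y, sq_nonneg (‖z‖ - 1)]
  rw [← Real.exp_add]
  gcongr
  nlinarith

lemma tendsto_sum_of_gaussian_bound [Fintype ι] {S : ℕ → Finset (ι → ℤ)} {a : ℕ → (ι → ℤ) → ℝ}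
    {φ : (ι → ℝ) → ℝ} {x₀ : ι → ℝ} {C c : ℝ} (hc : 0 < c)
    (hbound : ∀ᶠ N : ℕ in atTop, ∀ u ∈ S N, ‖√N ^ Fintype.card ι * a N u‖ ≤
      C * exp (-c * ‖√N • (latticePoint N u - x₀)‖ ^ 2))
    (hlim : ∀ y, Tendsto (fun N : ℕ => √N ^ Fintype.card ι *
      (S N : Set (ι → ℤ)).indicator (a N) (latticeIndex x₀ N y)) atTop (𝓝 (φ y))) :
    Tendsto (fun N => ∑ u ∈ S N, a N u) atTop (𝓝 (∫ y, φ y)) := by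
  have hintegral : Tendsto (fun N : ℕ => ∫ y, √N ^ Fintype.card ι *
      (S N : Set (ι → ℤ)).indicator (a N) (latticeIndex x₀ N y)) atTop (𝓝 (∫ y, φ y)) := by
    refine tendsto_integral_filter_of_dominated_convergence
      (fun y => |C| * (exp c * exp (-(c / 2) * ‖y‖ ^ 2))) ?_ ?_
      (((integrable_exp_neg_mul_norm_sq volume (half_pos hc)).const_mul _).const_mul _)
      (.of_forall hlim)
    · exact .of_forall fun N => (((measurable_of_countable ((S N : Set (ι → ℤ)).indicator
        (a N))).comp (measurable_latticeIndex x₀ N)).const_mul _).aestronglyMeasurable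
    · filter_upwards [hbound, eventually_ge_atTop 1] with N hbound hN
      refine .of_forall fun y => ?_
      by_cases hu : latticeIndex x₀ N y ∈ S N
      · rw [Set.indicator_of_mem (Finset.mem_coe.2 hu)]
        have hround := (norm_sqrt_smul_latticePoint_sub_le hN x₀ y).trans
          (inv_le_one_of_one_le₀ (Real.one_le_sqrt.2 (Nat.one_le_cast.2 hN)))
        refine (hbound _ hu).trans ?_
        gcongr
        · exact le_abs_self C
        · exact exp_neg_mul_sq_norm_le hc.le hround
      · rw [Set.indicator_of_notMem (mt Finset.mem_coe.1 hu), mul_zero, norm_zero]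
        positivity
  refine hintegral.congr' ?_
  filter_upwards [eventually_gt_atTop 0] with N hN
  exact (sum_eq_integral_latticeIndex _ _ x₀ hN).symm

end Lattice

/-! ### The simplex and its lattice points -/

section Simplex

open scoped Topology

variable {d : ℕ}

/-- The set `Δ̂`: the simplex of dimension `d`, parametrized by all barycentric coordinates but the
last. -/
def simplexChart (d : ℕ) : Set (Fin d → ℝ) := {x | (∀ k, 0 ≤ x k) ∧ ∑ k, x k ≤ 1}

/-- The point of the simplex with chart coordinates `x`, obtained by appending the coordinate
`1 - ∑ k, x k`. -/
noncomputable def simplexLift (x : Fin d → ℝ) : Fin (d + 1) → ℝ :=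
  Fin.snoc (α := fun _ => ℝ) x (1 - ∑ k, x k)

@[simp]
lemma simplexLift_castSucc (x : Fin d → ℝ) (k : Fin d) : simplexLift x k.castSucc = x k :=
  Fin.snoc_castSucc ..

@[simp]
lemma simplexLift_last (x : Fin d → ℝ) : simplexLift x (Fin.last d) = 1 - ∑ k, x k :=
  Fin.snoc_last ..

lemma simplexLift_mem_stdSimplex {x : Fin d → ℝ} :
    simplexLift x ∈ stdSimplex ℝ (Fin (d + 1)) ↔ x ∈ simplexChart d := by
  simp [stdSimplex, simplexChart, Fin.forall_fin_succ', Fin.sum_univ_castSucc]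

lemma contDiff_simplexLift {n : WithTop ℕ∞} : ContDiff ℝ n (simplexLift (d := d)) := by
  refine contDiff_pi.2 fun k => ?_
  cases k using Fin.lastCases with
  | last => simp only [simplexLift_last]; fun_prop
  | cast k => simp only [simplexLift_castSucc]; fun_prop

lemma continuous_simplexLift : Continuous (simplexLift (d := d)) :=
  (contDiff_simplexLift (n := 0)).continuous

lemma isCompact_simplexChart (d : ℕ) : IsCompact (simplexChart d) := by
  have hclosed : IsClosed (simplexChart d) := by
    have : simplexChart d = simplexLift ⁻¹' stdSimplex ℝ (Fin (d + 1)) :=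
      Set.ext fun _ => simplexLift_mem_stdSimplex.symm
    rw [this]
    exact (isClosed_stdSimplex ℝ _).preimage continuous_simplexLift
  refine (isCompact_Icc (a := (0 : Fin d → ℝ)) (b := 1)).of_isClosed_subset hclosed ?_
  rintro x ⟨hnonneg, hsum⟩
  exact ⟨hnonneg, fun k =>
    (Finset.single_le_sum (fun k _ => hnonneg k) (Finset.mem_univ k)).trans hsum⟩

lemma simplexLift_add_smul_sub (x b : Fin d → ℝ) (t : ℝ) :
    simplexLift (x + t • (x - b)) = simplexLift x + t • (simplexLift x - simplexLift b) := by
  ext k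
  cases k using Fin.lastCases with
  | last => simp [Finset.sum_add_distrib, ← Finset.mul_sum]; ring
  | cast k => simp

-- Moving `x` slightly away from the barycenter must keep every coordinate nonnegative.
lemma simplexLift_pos_of_mem_interior {x : Fin d → ℝ} (hx : x ∈ interior (simplexChart d))
    (k : Fin (d + 1)) : 0 < simplexLift x k := by
  set b : Fin d → ℝ := fun _ => 1 / (d + 1)
  have hb : simplexLift b k = 1 / (d + 1) := by
    cases k using Fin.lastCases with
    | last => simp [b]; field_simp; ring
    | cast k => simp [b]
  have hmove : Tendsto (fun t : ℝ => x + t • (x - b)) (𝓝[>] 0) (𝓝 x) := by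
    have : Continuous fun t : ℝ => x + t • (x - b) := by fun_prop
    simpa using (this.tendsto 0).mono_left nhdsWithin_le_nhds
  obtain ⟨t, htmem, ht : 0 < t⟩ :=
    ((hmove.eventually (mem_interior_iff_mem_nhds.1 hx)).and self_mem_nhdsWithin).exists
  have hnonneg := (simplexLift_mem_stdSimplex.2 htmem).1 k
  rw [simplexLift_add_smul_sub, Pi.add_apply, Pi.smul_apply, Pi.sub_apply, smul_eq_mul, hb]
    at hnonneg
  have : 0 < (1 + t) * simplexLift x k := by
    linarith [mul_pos ht (by positivity : (0 : ℝ) < 1 / (d + 1))]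
  exact pos_of_mul_pos_right this (by positivity)

/-- The indices of the lattice points of mesh `1 / N` in `simplexChart d`. They are integers, not
natural numbers, so that they can be compared with integer parts. -/
noncomputable def latticeSimplex (d N : ℕ) : Finset (Fin d → ℤ) :=
  (Fintype.piFinset fun _ => Finset.Icc (0 : ℤ) N).filter fun u => ∑ k, u k ≤ N

/-- All `d + 1` occupation numbers, recovered from the first `d`. Outside `latticeSimplex d N` the
negative entries are truncated to `0`. -/
def occupation (N : ℕ) (u : Fin d → ℤ) : Fin (d + 1) → ℕ :=
  Fin.snoc (α := fun _ => ℕ) (fun k => (u k).toNat) (N - ∑ k, u k).toNat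

@[simp]
lemma occupation_castSucc (N : ℕ) (u : Fin d → ℤ) (k : Fin d) :
    occupation N u k.castSucc = (u k).toNat :=
  Fin.snoc_castSucc ..

@[simp]
lemma occupation_last (N : ℕ) (u : Fin d → ℤ) :
    occupation N u (Fin.last d) = (N - ∑ k, u k).toNat :=
  Fin.snoc_last ..

lemma mem_latticeSimplex {N : ℕ} {u : Fin d → ℤ} :
    u ∈ latticeSimplex d N ↔ (∀ k, 0 ≤ u k) ∧ ∑ k, u k ≤ N := by
  simp only [latticeSimplex, Finset.mem_filter, Fintype.mem_piFinset, Finset.mem_Icc]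
  refine ⟨fun ⟨hIcc, hsum⟩ => ⟨fun k => (hIcc k).1, hsum⟩,
    fun ⟨hnonneg, hsum⟩ => ⟨fun k => ⟨hnonneg k, ?_⟩, hsum⟩⟩
  exact (Finset.single_le_sum (fun k _ => hnonneg k) (Finset.mem_univ k)).trans hsum

lemma card_latticeSimplex_le (d N : ℕ) : (latticeSimplex d N).card ≤ (N + 1) ^ d := by
  refine (Finset.card_filter_le _ _).trans ?_
  simp [Fintype.card_piFinset]

lemma latticePoint_mem_simplexChart {N : ℕ} (hN : 0 < N) {u : Fin d → ℤ} :
    latticePoint N u ∈ simplexChart d ↔ u ∈ latticeSimplex d N := by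
  have hN' : (0 : ℝ) < N := Nat.cast_pos.2 hN
  simp only [simplexChart, latticePoint, Set.mem_ofPred_eq, mem_latticeSimplex, ← Finset.sum_div,
    le_div_iff₀ hN', zero_mul, div_le_one hN']
  norm_cast

lemma natCast_occupation {N : ℕ} {u : Fin d → ℤ} (hu : u ∈ latticeSimplex d N)
    (k : Fin (d + 1)) :
    (occupation N u k : ℤ) = Fin.snoc (α := fun _ => ℤ) u (N - ∑ k, u k) k := by
  obtain ⟨hnonneg, hsum⟩ := mem_latticeSimplex.1 hu
  cases k using Fin.lastCases with
  | last => simp [hsum]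
  | cast k => simp [hnonneg k]

lemma sum_occupation {N : ℕ} {u : Fin d → ℤ} (hu : u ∈ latticeSimplex d N) :
    ∑ k, occupation N u k = N := by
  zify
  simp [natCast_occupation hu, Fin.sum_univ_castSucc]

lemma occupation_div {N : ℕ} (hN : 0 < N) {u : Fin d → ℤ} (hu : u ∈ latticeSimplex d N) :
    (fun k => (occupation N u k : ℝ) / N) = simplexLift (latticePoint N u) := by
  ext k
  rw [← Int.cast_natCast (occupation N u k), natCast_occupation hu]
  cases k using Fin.lastCases with
  | last =>
    have hN' : (N : ℝ) ≠ 0 := Nat.cast_ne_zero.2 hN.ne'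
    simp [latticePoint, ← Finset.sum_div, sub_div, hN']
  | cast k => simp [latticePoint]

lemma sum_piAntidiag_eq_sum_latticeSimplex {A : Type*} [AddCommMonoid A] (N : ℕ)
    (f : (Fin (d + 1) → ℕ) → A) :
    ∑ m ∈ Finset.piAntidiag Finset.univ N, f m =
      ∑ u ∈ latticeSimplex d N, f (occupation N u) := by
  have hlast {m : Fin (d + 1) → ℕ} (hm : ∑ k, m k = N) :
      (N : ℤ) - ∑ k : Fin d, (m k.castSucc : ℤ) = m (Fin.last d) := by
    rw [← hm, Fin.sum_univ_castSucc]
    push_cast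
    ring
  have hinv {m : Fin (d + 1) → ℕ} (hm : ∑ k, m k = N) :
      occupation N (fun k => (m k.castSucc : ℤ)) = m := by
    ext k
    cases k using Fin.lastCases with
    | last => simp [hlast hm]
    | cast k => simp
  refine Finset.sum_nbij' (fun m k => (m k.castSucc : ℤ)) (occupation N) ?_ ?_ ?_ ?_ ?_
  · intro m hm
    refine mem_latticeSimplex.2 ⟨fun k => by positivity, ?_⟩
    linarith [hlast (Finset.mem_piAntidiag.1 hm).1, Int.natCast_nonneg (m (Fin.last d))]
  · exact fun u hu => Finset.mem_piAntidiag.2 ⟨sum_occupation hu, fun k _ => Finset.mem_univ k⟩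
  · exact fun m hm => hinv (Finset.mem_piAntidiag.1 hm).1
  · intro u hu
    ext k
    simp [(mem_latticeSimplex.1 hu).1 k]
  · intro m hm
    rw [hinv (Finset.mem_piAntidiag.1 hm).1]

end Simplex

/-! ### The partition function -/

/-- The partition function `Z_N` of the mean-field model with `N` spins in `κ`, where `F` is the
energy density as a function of the magnetization. -/
noncomputable def partitionFunction {κ : Type*} [Fintype κ] [DecidableEq κ] (F : (κ → ℝ) → ℝ)
    (N : ℕ) : ℝ :=
  ∑ σ : Fin N → κ,
    exp (N * F fun k => ((Finset.univ.filter fun i => σ i = k).card : ℝ) / N)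

/-- The function `G = F + ent` of the chart coordinates. -/
noncomputable def freeEnergy {d : ℕ} (F : (Fin (d + 1) → ℝ) → ℝ) (x : Fin d → ℝ) : ℝ :=
  F (simplexLift x) + entropy (simplexLift x)

lemma partitionFunction_eq_sum_typeProb {κ : Type*} [Fintype κ] [DecidableEq κ]
    (F : (κ → ℝ) → ℝ) (N : ℕ) :
    partitionFunction F N = ∑ m ∈ Finset.piAntidiag Finset.univ N, typeProb m *
      exp (N * (F (fun k => (m k : ℝ) / N) + entropy fun k => (m k : ℝ) / N)) := by
  rw [partitionFunction, sum_card_fiber_eq_sum_multinomial (Fin N)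
    fun m => exp (N * F fun k => (m k : ℝ) / N), Fintype.card_fin]
  refine Finset.sum_congr rfl fun m hm => ?_
  rw [nsmul_eq_mul, multinomial_eq_typeProb_mul_exp (Finset.mem_piAntidiag.1 hm).1, mul_assoc,
    ← Real.exp_add, ← mul_add, add_comm (entropy _)]

lemma partitionFunction_eq_sum_latticeSimplex {d N : ℕ} (hN : 0 < N)
    (F : (Fin (d + 1) → ℝ) → ℝ) :
    partitionFunction F N = ∑ u ∈ latticeSimplex d N,
      typeProb (occupation N u) * exp (N * freeEnergy F (latticePoint N u)) := by
  rw [partitionFunction_eq_sum_typeProb, sum_piAntidiag_eq_sum_latticeSimplex]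
  refine Finset.sum_congr rfl fun u hu => ?_
  rw [occupation_div hN hu, freeEnergy]

/-! ### The Laplace method -/

section Laplace

open Metric
open scoped Matrix Topology

variable {d : ℕ} {f : (Fin d → ℝ) → ℝ} {g : ℝ} {x₀ : Fin d → ℝ} {H : Matrix (Fin d) (Fin d) ℝ}

/-- The term of index `u` in `partitionFunction_eq_sum_latticeSimplex`, divided by `exp (N * g)`,
for an arbitrary function `f` in place of the free energy. -/
noncomputable def relativeWeight (f : (Fin d → ℝ) → ℝ) (g : ℝ) (N : ℕ) (u : Fin d → ℤ) : ℝ :=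
  typeProb (occupation N u) * exp (N * (f (latticePoint N u) - g))

/-- The weight `w_j` of a maximizer with chart coordinates `x`, where `-H` is the Hessian of the
free energy. -/
noncomputable def laplaceWeight (H : Matrix (Fin d) (Fin d) ℝ) (x : Fin d → ℝ) : ℝ :=
  (√(H.det * ∏ k, simplexLift x k))⁻¹

lemma laplaceWeight_pos (hH : H.PosDef) (hx₀ : ∀ k, 0 < simplexLift x₀ k) :
    0 < laplaceWeight H x₀ :=
  inv_pos.2 (Real.sqrt_pos.2 (mul_pos hH.det_pos (Finset.prod_pos fun k _ => hx₀ k)))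

lemma relativeWeight_nonneg (f : (Fin d → ℝ) → ℝ) (g : ℝ) (N : ℕ) (u : Fin d → ℤ) :
    0 ≤ relativeWeight f g N u :=
  mul_nonneg (typeProb_nonneg _) (exp_pos _).le

lemma exists_gaussian_bound_relativeWeight (hf : HasCriticalExpansionAt f H x₀) (hH : H.PosDef)
    (hx₀ : ∀ k, 0 < simplexLift x₀ k) :
    ∃ C, ∃ c > 0, ∀ᶠ x in 𝓝 x₀, ∀ N > 0, ∀ u ∈ latticeSimplex d N, latticePoint N u = x →
      ‖√N ^ d * relativeWeight f (f x₀) N u‖ ≤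
        C * exp (-c * ‖√N • (latticePoint N u - x₀)‖ ^ 2) := by
  obtain ⟨b, hb, hbx₀⟩ : ∃ b > 0, ∀ k, b < simplexLift x₀ k := by
    obtain ⟨k₀, hk₀⟩ := Finite.exists_min (simplexLift x₀)
    exact ⟨simplexLift x₀ k₀ / 2, half_pos (hx₀ k₀), fun k =>
      (half_lt_self (hx₀ k₀)).trans_le (hk₀ k)⟩
  obtain ⟨C, hC⟩ := exists_sqrt_pow_mul_typeProb_le (Fintype.card_fin (d + 1)) hb
  obtain ⟨c, hc, hquad⟩ := hf.exists_eventually_le hH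
  have hcoord : ∀ᶠ x in 𝓝 x₀, ∀ k, b < simplexLift x k := eventually_all.2 fun k =>
    (((continuous_apply k).comp continuous_simplexLift).tendsto x₀).eventually_const_lt (hbx₀ k)
  refine ⟨C, c, hc, ?_⟩
  filter_upwards [hquad, hcoord] with x hquad hcoord N hN u hu hux
  subst hux
  have hstirling : √N ^ d * typeProb (occupation N u) ≤ C := by
    have := hC (occupation N u)
    simp only [sum_occupation hu] at this
    exact this fun k => (hcoord k).le.trans_eq (congrFun (occupation_div hN hu) k).symm
  have hexponent : N * (f (latticePoint N u) - f x₀) ≤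
      -c * ‖√N • (latticePoint N u - x₀)‖ ^ 2 := by
    rw [norm_smul, mul_pow, Real.norm_of_nonneg (Real.sqrt_nonneg _),
      Real.sq_sqrt N.cast_nonneg, mul_left_comm]
    gcongr
  have hC₀ : 0 ≤ C :=
    (mul_nonneg (by positivity) (typeProb_nonneg _)).trans hstirling
  rw [Real.norm_of_nonneg (mul_nonneg (by positivity) (relativeWeight_nonneg ..)),
    relativeWeight, ← mul_assoc]
  gcongr

lemma eventually_latticeIndex_mem_latticeSimplex (hx₀ : x₀ ∈ interior (simplexChart d))
    (y : Fin d → ℝ) : ∀ᶠ N : ℕ in atTop, latticeIndex x₀ N y ∈ latticeSimplex d N := by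
  filter_upwards [(tendsto_latticePoint_latticeIndex x₀ y).eventually
    (mem_interior_iff_mem_nhds.1 hx₀), eventually_gt_atTop 0] with N hmem hN
  exact (latticePoint_mem_simplexChart hN).1 hmem

lemma tendsto_sqrt_pow_mul_relativeWeight (hf : HasCriticalExpansionAt f H x₀)
    (hx₀ : x₀ ∈ interior (simplexChart d)) (y : Fin d → ℝ) :
    Tendsto (fun N : ℕ => √N ^ d * relativeWeight f (f x₀) N (latticeIndex x₀ N y)) atTop
      (𝓝 ((√(2 * π) ^ d)⁻¹ * (∏ k, √(simplexLift x₀ k))⁻¹ * exp (-(y ⬝ᵥ H *ᵥ y) / 2))) := by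
  have hmem := eventually_latticeIndex_mem_latticeSimplex hx₀ y
  have hpoint := tendsto_latticePoint_latticeIndex x₀ y
  have hratio (k : Fin (d + 1)) : Tendsto
      (fun N => (occupation N (latticeIndex x₀ N y) k : ℝ) / N) atTop (𝓝 (simplexLift x₀ k)) := by
    refine Tendsto.congr' ?_
      ((((continuous_apply k).comp continuous_simplexLift).tendsto x₀).comp hpoint)
    filter_upwards [hmem, eventually_gt_atTop 0] with N hu hN
      using (congrFun (occupation_div hN hu) k).symm
  have hstirling := tendsto_sqrt_pow_mul_typeProb (Fintype.card_fin (d + 1))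
    (hmem.mono fun N => sum_occupation) (simplexLift_pos_of_mem_interior hx₀) hratio
  have hexponent := hf.tendsto_sq_mul_sub hpoint (tendsto_sqrt_smul_latticePoint_sub x₀ y)
  refine (hstirling.mul (hexponent.rexp)).congr fun N => ?_
  rw [Real.sq_sqrt N.cast_nonneg, relativeWeight, mul_assoc]

lemma integral_gaussian_eq_laplaceWeight (hH : H.PosDef) (hx₀ : ∀ k, 0 ≤ simplexLift x₀ k) :
    ∫ y : Fin d → ℝ, (√(2 * π) ^ d)⁻¹ * (∏ k, √(simplexLift x₀ k))⁻¹ *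
      exp (-(y ⬝ᵥ H *ᵥ y) / 2) = laplaceWeight H x₀ := by
  rw [integral_const_mul, integral_exp_neg_half_quadraticForm hH, Fintype.card_fin,
    laplaceWeight, Real.sqrt_mul hH.det_pos.le, Real.sqrt_prod _ fun k _ => hx₀ k]
  field_simp

open scoped Classical in
lemma eventually_tendsto_sum_relativeWeight_near (hf : HasCriticalExpansionAt f H x₀)
    (hH : H.PosDef) (hx₀ : x₀ ∈ interior (simplexChart d)) :
    ∀ᶠ δ in 𝓝[>] 0, Tendsto (fun N : ℕ =>
      ∑ u ∈ latticeSimplex d N with latticePoint N u ∈ closedBall x₀ δ,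
        relativeWeight f (f x₀) N u) atTop (𝓝 (laplaceWeight H x₀)) := by
  have hpos := simplexLift_pos_of_mem_interior hx₀
  obtain ⟨C, c, hc, hbound⟩ := exists_gaussian_bound_relativeWeight hf hH hpos
  filter_upwards [nhdsWithin_le_nhds (eventually_closedBall_subset hbound), self_mem_nhdsWithin]
    with δ hbound hδ
  rw [← integral_gaussian_eq_laplaceWeight hH fun k => (hpos k).le]
  refine tendsto_sum_of_gaussian_bound (C := C) (x₀ := x₀) hc ?_ fun y => ?_
  · filter_upwards [eventually_gt_atTop 0] with N hN u hu
    obtain ⟨hu, hball⟩ := Finset.mem_filter.1 hu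
    rw [Fintype.card_fin]
    exact hbound hball N hN u hu rfl
  · refine (tendsto_sqrt_pow_mul_relativeWeight hf hx₀ y).congr' ?_
    filter_upwards [eventually_latticeIndex_mem_latticeSimplex hx₀ y,
      (tendsto_latticePoint_latticeIndex x₀ y).eventually (closedBall_mem_nhds x₀ hδ)]
      with N hu hball
    rw [Fintype.card_fin, Set.indicator_of_mem (by simpa using ⟨hu, hball⟩)]

lemma tendsto_pow_mul_exp_neg_mul (n : ℕ) {ε : ℝ} (hε : 0 < ε) :
    Tendsto (fun N : ℕ => ((N : ℝ) + 1) ^ n * exp (-ε * N)) atTop (𝓝 0) := by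
  have h := tendsto_pow_const_mul_const_pow_of_lt_one n (exp_pos (-ε)).le
    (Real.exp_lt_one_iff.2 (neg_lt_zero.2 hε))
  have hshift := ((tendsto_add_atTop_iff_nat 1).2 h).mul_const (exp ε)
  rw [zero_mul] at hshift
  refine hshift.congr fun N => ?_
  rw [← Real.exp_nat_mul, mul_assoc, ← Real.exp_add]
  push_cast
  ring_nf

lemma tendsto_sum_relativeWeight_far {ε : ℝ} (hε : 0 < ε) {T : ℕ → Finset (Fin d → ℤ)}
    (hT : ∀ N, T N ⊆ latticeSimplex d N)
    (hgap : ∀ᶠ N in atTop, ∀ u ∈ T N, f (latticePoint N u) ≤ g - ε) :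
    Tendsto (fun N => ∑ u ∈ T N, relativeWeight f g N u) atTop (𝓝 0) := by
  refine squeeze_zero' (.of_forall fun N => Finset.sum_nonneg fun u _ =>
    relativeWeight_nonneg ..) ?_ (tendsto_pow_mul_exp_neg_mul d hε)
  filter_upwards [hgap] with N hgap
  have hterm : ∀ u ∈ T N, relativeWeight f g N u ≤ exp (-ε * N) := by
    intro u hu
    refine (mul_le_of_le_one_left (exp_pos _).le (typeProb_le_one _)).trans ?_
    rw [mul_comm (-ε)]
    gcongr
    linarith [hgap u hu]
  calc ∑ u ∈ T N, relativeWeight f g N u ≤ (T N).card • exp (-ε * N) :=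
        Finset.sum_le_card_nsmul _ _ _ hterm
    _ ≤ ((N : ℝ) + 1) ^ d * exp (-ε * N) := by
        rw [nsmul_eq_mul]
        gcongr
        exact_mod_cast (Finset.card_le_card (hT N)).trans (card_latticeSimplex_le d N)

lemma exists_forall_le_sub_of_forall_lt {X : Type*} [TopologicalSpace X] {K : Set X}
    (hK : IsCompact K) {f : X → ℝ} (hf : ContinuousOn f K) (hlt : ∀ x ∈ K, f x < g) :
    ∃ ε > 0, ∀ x ∈ K, f x ≤ g - ε := by
  rcases K.eq_empty_or_nonempty with rfl | hne
  · exact ⟨1, one_pos, by simp⟩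
  · obtain ⟨x, hx, hmax⟩ := hK.exists_isMaxOn hne hf
    exact ⟨g - f x, sub_pos.2 (hlt x hx), fun y hy => (hmax hy).trans_eq (by ring)⟩

lemma exists_forall_notMem_closedBall_le_sub {X ι : Type*} [PseudoMetricSpace X] {K : Set X}
    (hK : IsCompact K) {f : X → ℝ} (hf : ContinuousOn f K) {M : ι → X}
    (hlt : ∀ x ∈ K, x ∉ Set.range M → f x < g) {δ : ℝ} (hδ : 0 < δ) :
    ∃ ε > 0, ∀ x ∈ K, (∀ j, x ∉ closedBall (M j) δ) → f x ≤ g - ε := by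
  set U := ⋃ j, ball (M j) δ
  have hcompact : IsCompact (K \ U) := hK.diff (isOpen_iUnion fun j => isOpen_ball)
  have hltU : ∀ x ∈ K \ U, f x < g := fun x ⟨hx, hxU⟩ => hlt x hx <| by
    rintro ⟨j, rfl⟩
    exact hxU (Set.mem_iUnion_of_mem j (mem_ball_self hδ))
  obtain ⟨ε, hε, hgap⟩ :=
    exists_forall_le_sub_of_forall_lt hcompact (hf.mono Set.sdiff_subset) hltU
  refine ⟨ε, hε, fun x hx hfar => hgap x ⟨hx, fun hxU => ?_⟩⟩
  obtain ⟨j, hj⟩ := Set.mem_iUnion.1 hxU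
  exact hfar j (ball_subset_closedBall hj)

lemma eventually_pairwise_disjoint_closedBall {X ι : Type*} [MetricSpace X] [Finite ι] {M : ι → X}
    (hM : M.Injective) :
    ∀ᶠ δ in 𝓝[>] 0, Pairwise fun i j => Disjoint (closedBall (M i) δ) (closedBall (M j) δ) := by
  refine eventually_all.2 fun i => eventually_all.2 fun j =>
    eventually_imp_distrib_left.2 fun hij => ?_
  have hdist := dist_pos.2 (hM.ne hij)
  filter_upwards [nhdsWithin_le_nhds (eventually_lt_nhds (half_pos hdist))] with δ hδ
  exact closedBall_disjoint_closedBall (by linarith)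

lemma sum_eq_sum_sum_filter_add_sum_filter {α ι A : Type*} [Fintype ι] [AddCommMonoid A]
    (S : Finset α) (a : α → A) {P : ι → α → Prop} [∀ j, DecidablePred (P j)]
    (hP : ∀ u, ∀ i j, P i u → P j u → i = j) :
    ∑ u ∈ S, a u = ∑ j, ∑ u ∈ S with P j u, a u + ∑ u ∈ S with ∀ j, ¬P j u, a u := by
  classical
  simp only [Finset.sum_filter]
  rw [Finset.sum_comm, ← Finset.sum_add_distrib]
  refine Finset.sum_congr rfl fun u _ => ?_
  by_cases hnear : ∃ j, P j u
  · obtain ⟨j, hj⟩ := hnear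
    rw [Finset.sum_eq_single j (fun i _ hij => if_neg fun hi => hij (hP u i j hi hj)) (by simp),
      if_pos hj, if_neg fun h => h j hj, add_zero]
  · push Not at hnear
    simp [hnear]

lemma tendsto_sum_relativeWeight {ι : Type*} [Fintype ι] (hf : ContinuousOn f (simplexChart d))
    {M : ι → Fin d → ℝ} (hM : M.Injective) (hMint : ∀ j, M j ∈ interior (simplexChart d))
    (hMg : ∀ j, f (M j) = g) (hlt : ∀ x ∈ simplexChart d, x ∉ Set.range M → f x < g)
    {H : ι → Matrix (Fin d) (Fin d) ℝ} (hH : ∀ j, (H j).PosDef)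
    (hexp : ∀ j, HasCriticalExpansionAt f (H j) (M j)) :
    Tendsto (fun N => ∑ u ∈ latticeSimplex d N, relativeWeight f g N u) atTop
      (𝓝 (∑ j, laplaceWeight (H j) (M j))) := by
  classical
  obtain ⟨δ, ⟨hnear, hdisj⟩, hδ : 0 < δ⟩ := (((eventually_all.2 fun j =>
    eventually_tendsto_sum_relativeWeight_near (hexp j) (hH j) (hMint j)).and
    (eventually_pairwise_disjoint_closedBall hM)).and self_mem_nhdsWithin).exists
  simp only [hMg] at hnear
  obtain ⟨ε, hε, hgap⟩ :=
    exists_forall_notMem_closedBall_le_sub (isCompact_simplexChart d) hf hlt hδ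
  have hfar := tendsto_sum_relativeWeight_far (f := f) (g := g) hε
    (T := fun N => (latticeSimplex d N).filter fun u =>
      ∀ j, latticePoint N u ∉ closedBall (M j) δ)
    (fun N => Finset.filter_subset _ _) <| by
      filter_upwards [eventually_gt_atTop 0] with N hN u hu
      obtain ⟨hu, hfar⟩ := Finset.mem_filter.1 hu
      exact hgap _ ((latticePoint_mem_simplexChart hN).2 hu) hfar
  have hsum := (tendsto_finsetSum Finset.univ fun j _ => hnear j).add hfar
  rw [add_zero] at hsum
  refine hsum.congr fun N => (sum_eq_sum_sum_filter_add_sum_filter _ _ fun u i j hi hj => ?_).symm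
  by_contra hij
  exact Set.disjoint_left.1 (hdisj hij) hi hj

end Laplace

section FreeEnergy

variable {d : ℕ} {F : (Fin (d + 1) → ℝ) → ℝ}

lemma continuousOn_freeEnergy (hF : ContinuousOn F (stdSimplex ℝ (Fin (d + 1)))) :
    ContinuousOn (freeEnergy F) (simplexChart d) :=
  (hF.comp continuous_simplexLift.continuousOn fun _ => simplexLift_mem_stdSimplex.2).add
    (continuous_entropy.comp continuous_simplexLift).continuousOn

lemma contDiffAt_freeEnergy {n : WithTop ℕ∞}
    (hF : ContDiffOn ℝ n F (stdSimplex ℝ (Fin (d + 1)))) {x : Fin d → ℝ}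
    (hx : x ∈ interior (simplexChart d)) : ContDiffAt ℝ n (freeEnergy F) x := by
  have hcomp : ContDiffOn ℝ n (F ∘ simplexLift) (simplexChart d) :=
    hF.comp contDiff_simplexLift.contDiffOn fun _ => simplexLift_mem_stdSimplex.2
  refine (hcomp.contDiffAt (mem_interior_iff_mem_nhds.1 hx)).add
    (ContDiffAt.sum fun k _ => ?_)
  have hk : ContDiffAt ℝ n (fun x : Fin d → ℝ => simplexLift x k) x :=
    (contDiff_pi.1 contDiff_simplexLift k).contDiffAt
  exact hk.neg.mul (hk.log (simplexLift_pos_of_mem_interior hx k).ne')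

lemma hasCriticalExpansionAt_freeEnergy
    (hF : ContDiffOn ℝ 2 F (stdSimplex ℝ (Fin (d + 1)))) {x : Fin d → ℝ}
    (hx : x ∈ interior (simplexChart d)) (hmax : IsMaxOn (freeEnergy F) (simplexChart d) x)
    {H : Matrix (Fin d) (Fin d) ℝ} (hH : ∀ k l, H k l =
      -(fderiv ℝ (fun x => fderiv ℝ (freeEnergy F) x (Pi.single l 1)) x) (Pi.single k 1)) :
    HasCriticalExpansionAt (freeEnergy F) H x :=
  hasCriticalExpansionAt_of_contDiffAt (contDiffAt_freeEnergy hF hx)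
    (hmax.isLocalMax (mem_interior_iff_mem_nhds.1 hx)).fderiv_eq_zero hH

lemma partitionFunction_div_exp {N : ℕ} (hN : 0 < N) (F : (Fin (d + 1) → ℝ) → ℝ) (g : ℝ) :
    partitionFunction F N / exp (N * g) =
      ∑ u ∈ latticeSimplex d N, relativeWeight (freeEnergy F) g N u := by
  rw [partitionFunction_eq_sum_latticeSimplex hN, Finset.sum_div]
  refine Finset.sum_congr rfl fun u _ => ?_
  rw [relativeWeight, mul_div_assoc, ← Real.exp_sub, mul_sub]

theorem stmt_0_general {ι : Type*} [Fintype ι]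
    (hF : ContinuousOn F (stdSimplex ℝ (Fin (d + 1))))
    {M : ι → Fin d → ℝ} (hMinj : M.Injective) (hMint : ∀ j, M j ∈ interior (simplexChart d))
    (hMmax : {x ∈ simplexChart d | IsMaxOn (freeEnergy F) (simplexChart d) x} = Set.range M)
    {H : ι → Matrix (Fin d) (Fin d) ℝ} (hHpd : ∀ j, (H j).PosDef)
    (hexp : ∀ j, HasCriticalExpansionAt (freeEnergy F) (H j) (M j)) :
    Tendsto (fun N : ℕ => partitionFunction F N / ((∑ j, laplaceWeight (H j) (M j)) *
      exp (N * sSup (freeEnergy F '' simplexChart d)))) atTop (nhds 1) := by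
  have hcont := continuousOn_freeEnergy hF
  set g := sSup (freeEnergy F '' simplexChart d)
  have hle : ∀ x ∈ simplexChart d, freeEnergy F x ≤ g := fun x hx =>
    le_csSup ((isCompact_simplexChart d).bddAbove_image hcont) (Set.mem_image_of_mem _ hx)
  have hMg (j : ι) : freeEnergy F (M j) = g :=
    have hj := hMmax.ge (Set.mem_range_self j)
    (hle _ hj.1).antisymm <| csSup_le (Set.Nonempty.image _ ⟨_, hj.1⟩) <|
      Set.forall_mem_image.2 fun _ hx => hj.2 hx
  have hlt : ∀ x ∈ simplexChart d, x ∉ Set.range M → freeEnergy F x < g := fun x hx hxM =>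
    (hle x hx).lt_of_ne fun hxg => hxM <|
      hMmax.le ⟨hx, fun y hy => (hle y hy).trans_eq hxg.symm⟩
  have : Nonempty ι := by
    obtain ⟨x, hx, hxmax⟩ := (isCompact_simplexChart d).exists_isMaxOn
      ⟨0, by simp [simplexChart]⟩ hcont
    exact (hMmax.le ⟨hx, hxmax⟩).nonempty
  have hsum_pos : 0 < ∑ j, laplaceWeight (H j) (M j) := Finset.sum_pos (fun j _ =>
    laplaceWeight_pos (hHpd j) (simplexLift_pos_of_mem_interior (hMint j))) Finset.univ_nonempty
  have hlim := (tendsto_sum_relativeWeight hcont hMinj hMint hMg hlt hHpd hexp).div_const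
    (∑ j, laplaceWeight (H j) (M j))
  rw [div_self hsum_pos.ne'] at hlim
  refine hlim.congr' ?_
  filter_upwards [eventually_gt_atTop 0] with N hN
  rw [← partitionFunction_div_exp hN, div_div, mul_comm]

end FreeEnergy

/-- Under assumptions (A) and (B), the partition function satisfies
`Z_N ~ |w| exp(N sup_{m̂ ∈ Δ̂} G(m̂))` as `N → ∞`.
We parametrize `q = d + 1` with `d ≥ 1` (i.e. `q ≥ 2`). -/
theorem stmt_0
    (d p : ℕ) (hd : 1 ≤ d) (hp : 1 ≤ p)
    (F : (Fin (d + 1) → ℝ) → ℝ)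
    (hF : ContDiffOn ℝ 2 F {m : Fin (d + 1) → ℝ | (∀ k, 0 ≤ m k) ∧ ∑ k, m k = 1})
    (ent : (Fin (d + 1) → ℝ) → ℝ)
    (hent : ∀ m, ent m = -∑ k, m k * Real.log (m k))
    (G : (Fin d → ℝ) → ℝ)
    (hG : ∀ x : Fin d → ℝ,
      G x = F (Fin.snoc x (1 - ∑ k, x k)) + ent (Fin.snoc x (1 - ∑ k, x k)))
    (Δhat : Set (Fin d → ℝ))
    (hΔhat : Δhat = {x : Fin d → ℝ | (∀ k, 0 ≤ x k) ∧ ∑ k, x k ≤ 1})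
    -- (A): the global maximizers of `G` on `Δ̂` are exactly the `p` distinct points
    -- `M 1, …, M p`, all lying in the interior of `Δ̂`
    (M : Fin p → Fin d → ℝ)
    (hMinj : Function.Injective M)
    (hMint : ∀ j, M j ∈ interior Δhat)
    (hMmax : ∀ j, ∀ x ∈ Δhat, G x ≤ G (M j))
    (hMonly : ∀ x ∈ Δhat, (∀ y ∈ Δhat, G y ≤ G x) → ∃ j, x = M j)
    -- (B): `H_j = -Hess G (M_j)` is positive definite
    (H : Fin p → Matrix (Fin d) (Fin d) ℝ)
    (hH : ∀ j k l, H j k l =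
      -(fderiv ℝ (fun x => fderiv ℝ G x (Pi.single l 1)) (M j)) (Pi.single k 1))
    (hHpd : ∀ j, (H j).PosDef)
    (Mfull : Fin p → Fin (d + 1) → ℝ)
    (hMfull : ∀ j, Mfull j = Fin.snoc (M j) (1 - ∑ k, M j k))
    (w : Fin p → ℝ)
    (hw : ∀ j, w j = (Real.sqrt ((H j).det * ∏ k, Mfull j k))⁻¹)
    (Z : ℕ → ℝ)
    (hZ : ∀ N : ℕ, Z N = ∑ σ : Fin N → Fin (d + 1),
      Real.exp ((N : ℝ) * F (fun k => ((Finset.univ.filter fun i => σ i = k).card : ℝ) / N))) :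
    Tendsto (fun N : ℕ =>
        Z N / ((∑ j, w j) * Real.exp ((N : ℝ) * sSup (G '' Δhat)))) atTop (nhds 1) := by
  subst hΔhat
  obtain rfl : G = freeEnergy F := by
    ext x
    simp [hG, hent, freeEnergy, simplexLift, entropy, negMulLog]
  have hw' (j : Fin p) : w j = laplaceWeight (H j) (M j) := by
    rw [hw, hMfull]; rfl
  simp only [hw', show Z = partitionFunction F from funext hZ]
  have hmax : {x ∈ simplexChart d | IsMaxOn (freeEnergy F) (simplexChart d) x} = Set.range M :=
    Set.Subset.antisymm (fun x ⟨hx, hxmax⟩ => (hMonly x hx hxmax).imp fun _ => Eq.symm)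
      (Set.range_subset_iff.2 fun j => ⟨interior_subset (hMint j), hMmax j⟩)
  exact stmt_0_general hF.continuousOn hMinj hMint hmax hHpd fun j =>
    hasCriticalExpansionAt_freeEnergy hF (hMint j) (hMmax j) (hH j)
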